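/- (Main result) For any graph F with maximum degree at least two, there exist γ = γ(F) > 0 and n_0 such that for all n ≥ n_0, both the expectation threshold q(F_n) and the fractional expectation threshold q_f(F_n) of the down-set F_n of F-free graphs on [n] satisfy q(F_n), q_f(F_n) ≥ n^γ · p_c(F_n). -/

import Mathlib

open scoped Classical
open Finset

/-- `G` is `F`-free: there is no embedding of `F` into `G` mapping edges to edges. -/
def FFree {V W : Type*} (F : SimpleGraph V) (G : SimpleGraph W) : Prop :=
  ¬ ∃ f : V ↪ W, ∀ a b, F.Adj a b → G.Adj (f a) (f b)

/-- `μ_p` of the down-set of `F`-free graphs on `[n]`. -/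
noncomputable def muFree {V : Type*} [Fintype V] (F : SimpleGraph V) (n : ℕ) (p : ℝ) : ℝ :=
  ∑ G : SimpleGraph (Fin n),
    if FFree F G then p ^ G.edgeFinset.card * (1 - p) ^ (n.choose 2 - G.edgeFinset.card)
    else 0

/-- The set of `p ∈ [0,1]` admitting an (integral) certificate for the down-set of
`F`-free graphs on `[n]`. -/
noncomputable def certSet {V : Type*} [Fintype V] (F : SimpleGraph V) (n : ℕ) : Set ℝ :=
  {p | p ∈ Set.Icc (0 : ℝ) 1 ∧ ∃ 𝒢 : Finset (SimpleGraph (Fin n)),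
    (∀ G : SimpleGraph (Fin n), FFree F G → ∃ J ∈ 𝒢, G ≤ J) ∧
    ∑ J ∈ 𝒢, (1 - p) ^ (n.choose 2 - J.edgeFinset.card) ≤ 1 / 2}

/-- The set of `p ∈ [0,1]` admitting a fractional certificate for the down-set of
`F`-free graphs on `[n]`. -/
noncomputable def fracCertSet {V : Type*} [Fintype V] (F : SimpleGraph V) (n : ℕ) : Set ℝ :=
  {p | p ∈ Set.Icc (0 : ℝ) 1 ∧ ∃ lam : SimpleGraph (Fin n) → ℝ, (∀ S, 0 ≤ lam S) ∧
    (∑ S : SimpleGraph (Fin n), lam S * (1 - p) ^ (n.choose 2 - S.edgeFinset.card) ≤ 1 / 2) ∧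
    ∀ G : SimpleGraph (Fin n), FFree F G →
      1 ≤ ∑ S ∈ Finset.univ.filter (fun S : SimpleGraph (Fin n) => G ≤ S), lam S}

/-!
An integral certificate is a fractional one, so it suffices to bound every `x ∈ fracCertSet F n`
from below. Let `A` be a vertex set of `F` maximising `e / v`, where `v = #A` and `e` is the number
of edges inside `A`, and let `J = F[A]`. A vertex of degree two gives `e / v ≥ 2 / 3 > 1 / 2`, which is
equivalent to `(v - 2) / (e - 1) < v / e` (`exists_densest`).

*Upper bound on `pc`* (`pc_upper`): `pc ≤ n ^ (-v/e + δ)` for large `n`. Split `[n]` into `|V(F)|`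
blocks of size `m` and count the copies of `F` with each vertex in its own block. Two such copies
share only edges inside the set `B` of vertices on which they agree, so the normalised second moment is
at most `∑_B m ^ (-#B) * p ^ (-e(B))`. If `p > n ^ (-v/e + δ)`, every term except `B = ∅` tends to
zero, and Cauchy–Schwarz makes the probability of being `F`-free less than `1 / 2`.

*Lower bound on certificates* (`cert_lower`): take `β` with `(v - 2) / (e - 1) < β < v / e`, sample
`G(n, r)` with `r = n ^ (-β)`, and delete the edges of a maximal family of edge-disjoint copies of `J`.
The result is `J`-free, hence `F`-free. If it misses an edge set `T` of size `t`, then either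
`G(n, r)` has at most `r t / 4` edges in `T`, or it contains at least `r t / (4 e)` disjoint copies of
`J` meeting `T`. The expected number of copies meeting `T` is `O(t n ^ (v - 2) r ^ e) = o(r t)`, so both
events have probability at most `exp (-r t / (4 e))`. If `x` is smaller than `r` by a power of `n`, this
gives a probability at most `(3 / 2) (1 - x) ^ t` as soon as `x t ≥ 1 / 3`; for `x t ≤ 1 / 3` that bound is
trivial by Bernoulli's inequality. Since `(3 / 2) (1 / 2) < 1`, averaging the covering condition over
this random graph contradicts the cost bound of a fractional certificate at `x` (`no_cert`).
-/

/-! ### Random subsets of a finite set -/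

/-- The binomial weight of `s ⊆ E`: the probability that the random subset of `E` containing each
element independently with probability `p` equals `s`. -/
noncomputable def bw {α : Type*} (p : ℝ) (E s : Finset α) : ℝ :=
  p ^ #s * (1 - p) ^ (#E - #s)

lemma bw_nonneg {α : Type*} {p : ℝ} (h0 : 0 ≤ p) (h1 : p ≤ 1) (E s : Finset α) :
    0 ≤ bw p E s :=
  mul_nonneg (pow_nonneg h0 _) (pow_nonneg (by linarith) _)

lemma sum_bw {α : Type*} (p : ℝ) (E : Finset α) : ∑ s ∈ E.powerset, bw p E s = 1 := by
  have h := Finset.sum_pow_mul_eq_add_pow p (1 - p) E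
  simpa [bw] using h

/-- The random set contains a given `A` with probability `p ^ #A`. -/
lemma sum_bw_superset {α : Type*} [DecidableEq α] (p : ℝ) (E A : Finset α) (hA : A ⊆ E) :
    ∑ s ∈ E.powerset, (if A ⊆ s then bw p E s else 0) = p ^ #A := by
  have h := Finset.prod_add (fun _ : α => p) (fun i => if i ∈ A then (0 : ℝ) else 1 - p) E
  have hl : ∏ i ∈ E, (p + if i ∈ A then (0 : ℝ) else 1 - p) = p ^ #A := by
    rw [← Finset.prod_sdiff hA]
    have h1 : ∏ i ∈ E \ A, (p + if i ∈ A then (0 : ℝ) else 1 - p) = 1 := by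
      apply Finset.prod_eq_one
      intro i hi
      simp [(Finset.mem_sdiff.1 hi).2]
    rw [h1, one_mul, Finset.prod_congr rfl (g := fun _ => p) (fun i hi => by simp [hi])]
    simp
  rw [← hl, h]
  refine Finset.sum_congr rfl fun s hs => ?_
  have hs' := Finset.mem_powerset.1 hs
  split_ifs with hAs
  · rw [Finset.prod_congr rfl (g := fun _ => 1 - p) (s₁ := E \ s)]
    · simp [bw, Finset.card_sdiff_of_subset hs']
    · intro i hi
      have : i ∉ A := fun h => (Finset.mem_sdiff.1 hi).2 (hAs h)
      simp [this]
  · obtain ⟨i, hiA, his⟩ := Finset.not_subset.1 hAs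
    rw [Finset.prod_eq_zero (s := E \ s) (i := i)]
    · simp
    · exact Finset.mem_sdiff.2 ⟨hA hiA, his⟩
    · simp [hiA]

/-- The exponential moment of `-#(s ∩ T)` at base two. -/
lemma sum_bw_half_pow {α : Type*} [DecidableEq α] (p : ℝ) (E T : Finset α) (hT : T ⊆ E) :
    ∑ s ∈ E.powerset, bw p E s * (1 / 2) ^ #(s ∩ T) = (1 - p / 2) ^ #T := by
  have h := Finset.prod_add (fun i => p * if i ∈ T then (1 / 2 : ℝ) else 1) (fun _ => 1 - p) E
  have hl : ∏ i ∈ E, (p * (if i ∈ T then (1 / 2 : ℝ) else 1) + (1 - p)) = (1 - p / 2) ^ #T := by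
    rw [← Finset.prod_sdiff hT]
    have h1 : ∏ i ∈ E \ T, (p * (if i ∈ T then (1 / 2 : ℝ) else 1) + (1 - p)) = 1 := by
      apply Finset.prod_eq_one
      intro i hi
      simp [(Finset.mem_sdiff.1 hi).2]
    rw [h1, one_mul,
      Finset.prod_congr rfl (g := fun _ => 1 - p / 2) (fun i hi => by simp [hi]; ring)]
    simp
  rw [← hl, h]
  refine Finset.sum_congr rfl fun s hs => ?_
  have hs' := Finset.mem_powerset.1 hs
  rw [Finset.prod_mul_distrib, Finset.prod_ite, Finset.filter_mem_eq_inter]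
  simp [bw, Finset.card_sdiff_of_subset hs']
  ring

/-- Lower tail bound for the number of elements of `T` in the random set. -/
lemma lower_tail {α : Type*} [DecidableEq α] {p : ℝ} (h0 : 0 ≤ p) (h1 : p ≤ 1) (E T : Finset α) (hT : T ⊆ E)
    (a : ℝ) :
    ∑ s ∈ E.powerset, (if (#(s ∩ T) : ℝ) ≤ a then bw p E s else 0)
      ≤ Real.exp (a - p * #T / 2) := by
  have hstep : ∑ s ∈ E.powerset, (if (#(s ∩ T) : ℝ) ≤ a then bw p E s else 0)
      ≤ ∑ s ∈ E.powerset, Real.exp a * (bw p E s * (1 / 2) ^ #(s ∩ T)) := by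
    refine Finset.sum_le_sum fun s _ => ?_
    have hb := bw_nonneg h0 h1 E s
    split_ifs with h
    · have h2 : (2 : ℝ) ^ #(s ∩ T) ≤ Real.exp a := by
        calc (2 : ℝ) ^ #(s ∩ T) ≤ (Real.exp 1) ^ #(s ∩ T) := by
              gcongr
              linarith [Real.add_one_le_exp (1 : ℝ)]
          _ = Real.exp (#(s ∩ T)) := by rw [← Real.exp_nat_mul]; simp
          _ ≤ _ := Real.exp_le_exp.2 h
      have h3 : 1 ≤ Real.exp a * (1 / 2) ^ #(s ∩ T) := by
        rw [one_div, inv_pow, ← div_eq_mul_inv, le_div_iff₀ (by positivity)]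
        linarith
      nlinarith
    · positivity
  refine hstep.trans ?_
  rw [← Finset.mul_sum, sum_bw_half_pow p E T hT, sub_eq_add_neg a, Real.exp_add]
  gcongr
  calc (1 - p / 2) ^ #T ≤ (Real.exp (-(p / 2))) ^ #T := by
        gcongr
        · linarith
        · exact Real.one_sub_le_exp_neg _
    _ = _ := by rw [← Real.exp_nat_mul]; ring_nf

/-- Upper tail bound for the number of disjoint members of `H` inside the random set: there are at most
`#H ^ k / k!` disjoint `k`-element families, and each is present with probability `p ^ (e * k)`. -/
lemma disjoint_families {α : Type*} [DecidableEq α] {p : ℝ} (h0 : 0 ≤ p) (h1 : p ≤ 1) (E : Finset α)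
    (H : Finset (Finset α)) (e k : ℕ) (hH : ∀ h ∈ H, h ⊆ E ∧ #h = e) :
    ∑ s ∈ E.powerset,
      (if ∃ K ⊆ H, #K = k ∧ (K : Set (Finset α)).PairwiseDisjoint id ∧ ∀ h ∈ K, h ⊆ s
        then bw p E s else 0)
      ≤ (#H * p ^ e) ^ k / k.factorial := by
  set P := (H.powersetCard k).filter (fun K : Finset (Finset α) => (K : Set (Finset α)).PairwiseDisjoint id) with hP
  have hstep : ∑ s ∈ E.powerset,
      (if ∃ K ⊆ H, #K = k ∧ (K : Set (Finset α)).PairwiseDisjoint id ∧ ∀ h ∈ K, h ⊆ s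
        then bw p E s else 0) ≤
      ∑ s ∈ E.powerset, ∑ K ∈ P, (if K.biUnion id ⊆ s then bw p E s else 0) := by
    refine Finset.sum_le_sum fun s _ => ?_
    have hb := bw_nonneg h0 h1 E s
    have hnn : ∀ K ∈ P, 0 ≤ (if K.biUnion id ⊆ s then bw p E s else 0) := by
      intro K _
      split_ifs <;> simp [hb]
    split_ifs with h
    · obtain ⟨K, hKH, hKk, hKd, hKs⟩ := h
      have hK : K ∈ P := by simp [hP, hKH, hKk, hKd]
      have hsub : K.biUnion id ⊆ s := Finset.biUnion_subset.2 hKs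
      refine le_trans ?_ (Finset.single_le_sum hnn hK)
      simp [hsub]
    · exact Finset.sum_nonneg hnn
  refine hstep.trans ?_
  rw [Finset.sum_comm]
  have hterm : ∀ K ∈ P, ∑ s ∈ E.powerset, (if K.biUnion id ⊆ s then bw p E s else 0)
      = (p ^ e) ^ k := by
    intro K hK
    simp only [hP, Finset.mem_filter, Finset.mem_powersetCard] at hK
    obtain ⟨⟨hKH, hKk⟩, hKd⟩ := hK
    rw [sum_bw_superset p E (K.biUnion id) (Finset.biUnion_subset.2 fun h hh => (hH h (hKH hh)).1),
      Finset.card_biUnion (fun x hx y hy hxy => hKd hx hy hxy),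
      Finset.sum_congr rfl (fun h hh => show #(id h) = e from (hH h (hKH hh)).2)]
    simp [hKk, ← pow_mul, mul_comm]
  rw [Finset.sum_congr rfl hterm, Finset.sum_const, nsmul_eq_mul, mul_pow, mul_div_right_comm]
  gcongr
  calc (#P : ℝ) ≤ #(H.powersetCard k) := by exact_mod_cast Finset.card_filter_le _ _
    _ = ((#H).choose k : ℝ) := by rw [Finset.card_powersetCard]
    _ ≤ _ := Nat.choose_le_pow_div k #H

/-- A set `s` contains a pairwise disjoint subfamily of `H` whose removal leaves no member of `H`:
any maximal disjoint subfamily works. -/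
lemma exists_deletion {α : Type*} [DecidableEq α] (H : Finset (Finset α)) (hne : ∀ h ∈ H, h.Nonempty)
    (s : Finset α) :
    ∃ M ⊆ H, (M : Set (Finset α)).PairwiseDisjoint id ∧ (∀ h ∈ M, h ⊆ s) ∧
      ∀ h ∈ H, ¬ h ⊆ s \ M.biUnion id := by
  set P := H.powerset.filter
    (fun M : Finset (Finset α) => (M : Set (Finset α)).PairwiseDisjoint id ∧ ∀ h ∈ M, h ⊆ s) with hP
  have hPne : P.Nonempty := ⟨∅, by simp [hP]⟩
  obtain ⟨M, hM, hmax⟩ := Finset.exists_max_image P (fun M => #M) hPne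
  have hM' := hM
  simp only [hP, Finset.mem_filter, Finset.mem_powerset] at hM'
  obtain ⟨hMH, hMd, hMs⟩ := hM'
  refine ⟨M, hMH, hMd, hMs, fun h hh hsub => ?_⟩
  have hdisj : ∀ g ∈ M, Disjoint h g := by
    intro g hg
    rw [Finset.disjoint_left]
    intro x hx hxg
    exact (Finset.mem_sdiff.1 (hsub hx)).2 (Finset.mem_biUnion.2 ⟨g, hg, hxg⟩)
  have hnot : h ∉ M := fun hm => (hne h hh).ne_empty (disjoint_self.1 (hdisj h hm))
  have hin : insert h M ∈ P := by
    simp only [hP, Finset.mem_filter, Finset.mem_powerset, Finset.insert_subset_iff,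
      Finset.forall_mem_insert, Finset.coe_insert]
    refine ⟨⟨hh, hMH⟩, ?_, fun x hx => (Finset.mem_sdiff.1 (hsub hx)).1, hMs⟩
    exact hMd.insert fun g hg _ => hdisj g hg
  have := hmax _ hin
  rw [Finset.card_insert_of_notMem hnot] at this
  omega

/-- There is a rule turning `s` into an `H`-free set `D s` together with a bound, for every `T`, on the
probability that `D s` misses `T`: when it does, either `s` has at most `a` elements in `T`, or more
than `a / e` disjoint deleted members of `H` meet `T`. -/
lemma exists_thinning {α : Type*} [DecidableEq α] {p : ℝ} (h0 : 0 ≤ p) (h1 : p ≤ 1) (E : Finset α)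
    (H : Finset (Finset α)) (e : ℕ) (he : 0 < e) (hH : ∀ h ∈ H, h ⊆ E ∧ #h = e) :
    ∃ D : Finset α → Finset α, (∀ s, ∀ h ∈ H, ¬ h ⊆ D s) ∧
      ∀ T ⊆ E, ∀ a : ℝ,
        ∑ s ∈ E.powerset, (if Disjoint (D s) T then bw p E s else 0) ≤
          Real.exp (a - p * #T / 2) +
          (#(H.filter fun h => ¬ Disjoint h T) * p ^ e) ^ ⌈a / e⌉₊ / (⌈a / e⌉₊).factorial := by
  choose M hMH hMd hMs hfree using exists_deletion H
    (fun h hh => Finset.card_pos.1 (by rw [(hH h hh).2]; exact he))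
  refine ⟨fun s => s \ (M s).biUnion id, hfree, ?_⟩
  intro T hT a
  refine le_trans ?_ (add_le_add (lower_tail h0 h1 E T hT a)
    (disjoint_families h0 h1 E (H.filter fun h => ¬ Disjoint h T) e ⌈a / e⌉₊
      (fun h hh => hH h (Finset.mem_filter.1 hh).1)))
  rw [← Finset.sum_add_distrib]
  refine Finset.sum_le_sum fun s _ => ?_
  have hb := bw_nonneg h0 h1 E s
  by_cases hd : Disjoint (s \ (M s).biUnion id) T
  swap
  · rw [if_neg hd]
    refine add_nonneg ?_ ?_ <;> split_ifs <;> simp [hb]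
  rw [if_pos hd]
  by_cases hX : (#(s ∩ T) : ℝ) ≤ a
  · rw [if_pos hX]
    refine le_add_of_nonneg_right ?_
    split_ifs <;> simp [hb]
  · rw [if_neg hX, if_pos, zero_add]
    set N := (M s).filter fun h => ¬ Disjoint h T with hN
    have hcover : s ∩ T ⊆ N.biUnion id := by
      intro x hx
      obtain ⟨hxs, hxT⟩ := Finset.mem_inter.1 hx
      have hxM : x ∈ (M s).biUnion id := by
        by_contra hcon
        exact Finset.disjoint_left.1 hd (Finset.mem_sdiff.2 ⟨hxs, hcon⟩) hxT
      obtain ⟨h, hh, hxh⟩ := Finset.mem_biUnion.1 hxM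
      refine Finset.mem_biUnion.2 ⟨h, Finset.mem_filter.2 ⟨hh, ?_⟩, hxh⟩
      exact fun hdis => Finset.disjoint_left.1 hdis hxh hxT
    have hcard : #(s ∩ T) ≤ #N * e :=
      (Finset.card_le_card hcover).trans (Finset.card_biUnion_le_card_mul _ _ _
        fun h hh => (hH h (hMH s (Finset.mem_filter.1 hh).1)).2.le)
    have hk : ⌈a / e⌉₊ ≤ #N := by
      rw [Nat.ceil_le, div_le_iff₀ (by exact_mod_cast he)]
      have : (#(s ∩ T) : ℝ) ≤ #N * e := by exact_mod_cast hcard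
      linarith
    obtain ⟨K, hKN, hKk⟩ := Finset.exists_subset_card_eq hk
    have hKM : K ⊆ M s := hKN.trans (Finset.filter_subset _ _)
    refine ⟨K, fun h hh => ?_, hKk, (hMd s).subset (by exact_mod_cast hKM),
      fun h hh => hMs s h (hKM hh)⟩
    exact Finset.mem_filter.2 ⟨hMH s (hKM hh), (Finset.mem_filter.1 (hKN hh)).2⟩

/-! ### Copies of a graph and the lower bound on fractional certificates -/

/-- Sums over graphs on `[n]` are sums over subsets of the edge set of the complete graph. -/
lemma sum_graphs {n : ℕ} (f : Finset (Sym2 (Fin n)) → ℝ) :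
    ∑ G : SimpleGraph (Fin n), f G.edgeFinset
      = ∑ s ∈ (⊤ : SimpleGraph (Fin n)).edgeFinset.powerset, f s := by
  refine Finset.sum_nbij' (fun G => G.edgeFinset)
    (fun s => SimpleGraph.fromEdgeSet (s : Set (Sym2 (Fin n)))) ?_ ?_ ?_ ?_ ?_
  · intro G _
    rw [Finset.mem_powerset]
    exact SimpleGraph.edgeFinset_mono le_top
  · intro s _
    exact Finset.mem_univ _
  · intro G _
    simp
  · intro s hs
    ext z
    have : z ∈ s → ¬ z.IsDiag := by
      intro hz
      have := Finset.mem_powerset.1 hs hz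
      simpa using this
    simp only [SimpleGraph.mem_edgeFinset, SimpleGraph.edgeSet_fromEdgeSet, Set.mem_sdiff,
      Finset.mem_coe]
    exact ⟨fun h => h.1, fun h => ⟨h, this h⟩⟩
  · intro G _
    rfl

/-- The edge sets of the copies of `J` in the complete graph on `[n]`. -/
noncomputable def copies {W : Type*} [Fintype W] (J : SimpleGraph W) (n : ℕ) :
    Finset (Finset (Sym2 (Fin n))) :=
  (Finset.univ : Finset (W ↪ Fin n)).image fun f : W ↪ Fin n => J.edgeFinset.image (Sym2.map f)

lemma image_subset_top {W : Type*} [Fintype W] (J : SimpleGraph W) {n : ℕ} (f : W → Fin n)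
    (hf : Function.Injective f) :
    J.edgeFinset.image (Sym2.map f) ⊆ (⊤ : SimpleGraph (Fin n)).edgeFinset := by
  intro z hz
  obtain ⟨d, hd, rfl⟩ := Finset.mem_image.1 hz
  induction d with
  | _ a b =>
    have hab : J.Adj a b := by simpa using hd
    simpa using hf.ne hab.ne

lemma card_image_edges {W : Type*} [Fintype W] (J : SimpleGraph W) {n : ℕ} (f : W → Fin n)
    (hf : Function.Injective f) : #(J.edgeFinset.image (Sym2.map f)) = #J.edgeFinset :=
  Finset.card_image_of_injective _ (Sym2.map.injective hf)

lemma copies_spec {W : Type*} [Fintype W] (J : SimpleGraph W) (n : ℕ) :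
    ∀ h ∈ copies J n, h ⊆ (⊤ : SimpleGraph (Fin n)).edgeFinset ∧ #h = #J.edgeFinset := by
  intro h hh
  obtain ⟨f, -, rfl⟩ := Finset.mem_image.1 hh
  exact ⟨image_subset_top J f f.injective, card_image_edges J f f.injective⟩

lemma ffree_of_copies {W : Type*} [Fintype W] (J : SimpleGraph W) {n : ℕ}
    (s : Finset (Sym2 (Fin n))) (hs : ∀ h ∈ copies J n, ¬ h ⊆ s) :
    FFree J (SimpleGraph.fromEdgeSet (s : Set (Sym2 (Fin n)))) := by
  rintro ⟨f, hf⟩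
  refine hs _ (Finset.mem_image.2 ⟨f, Finset.mem_univ _, rfl⟩) fun z hz => ?_
  obtain ⟨d, hd, rfl⟩ := Finset.mem_image.1 hz
  induction d with
  | _ a b =>
    have hab : J.Adj a b := by simpa using hd
    have := hf a b hab
    rw [SimpleGraph.fromEdgeSet_adj] at this
    simpa using this.1

lemma card_functions_prescribed {W X : Type*} [Fintype W] [Fintype X] [DecidableEq X]
    (A : Finset W) (c : W → X) :
    #(Finset.univ.filter fun f : W → X => ∀ a ∈ A, f a = c a)
      = Fintype.card X ^ (Fintype.card W - #A) := by
  have h : (Finset.univ.filter fun f : W → X => ∀ a ∈ A, f a = c a)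
      = Fintype.piFinset fun a => if a ∈ A then {c a} else Finset.univ := by
    ext f
    simp only [Finset.mem_filter, Finset.mem_univ, true_and, Fintype.mem_piFinset]
    refine forall_congr' fun a => ?_
    by_cases ha : a ∈ A <;> simp [ha]
  rw [h, Fintype.card_piFinset]
  have h2 : ∀ a, #(if a ∈ A then {c a} else (Finset.univ : Finset X))
      = if a ∈ A then 1 else Fintype.card X := by
    intro a
    split_ifs <;> simp
  simp only [h2]
  rw [Finset.prod_ite, Finset.prod_const_one, one_mul, Finset.prod_const]
  congr 1
  rw [← Finset.card_compl]
  congr 1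
  ext a
  simp

lemma card_embeddings_two {W X : Type*} [Fintype W] [Fintype X] [DecidableEq X]
    {a b : W} (hab : a ≠ b) (x y : X) :
    #(Finset.univ.filter fun f : W ↪ X => f a = x ∧ f b = y)
      ≤ Fintype.card X ^ (Fintype.card W - 2) := by
  rw [← Finset.card_pair hab,
    ← card_functions_prescribed {a, b} (fun w => if w = a then x else y)]
  refine Finset.card_le_card_of_injOn (fun f => (f : W → X)) ?_ ?_
  · intro f hf
    have hf' : f a = x ∧ f b = y := by simpa using hf
    simp [hf'.1, hf'.2, hab.symm]
  · intro f _ g _ hfg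
    exact DFunLike.coe_injective hfg

lemma card_embeddings_edge {W X : Type*} [Fintype W] [Fintype X] [DecidableEq X]
    (J : SimpleGraph W) (d : Sym2 W)
    (hd : d ∈ J.edgeFinset) (t : Sym2 X) :
    #(Finset.univ.filter fun f : W ↪ X => Sym2.map f d = t)
      ≤ 2 * Fintype.card X ^ (Fintype.card W - 2) := by
  induction d with
  | _ a b =>
    induction t with
    | _ x y =>
      have hab : J.Adj a b := by simpa using hd
      have hsub : (Finset.univ.filter fun f : W ↪ X => Sym2.map f s(a, b) = s(x, y)) ⊆
          (Finset.univ.filter fun f : W ↪ X => f a = x ∧ f b = y) ∪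
          (Finset.univ.filter fun f : W ↪ X => f a = y ∧ f b = x) := by
        intro f hf
        simpa [Sym2.eq_iff] using hf
      have h1 := card_embeddings_two (X := X) hab.ne x y
      have h2 := card_embeddings_two (X := X) hab.ne y x
      have h3 := (Finset.card_le_card hsub).trans (Finset.card_union_le _ _)
      omega

/-- Each edge of the complete graph lies in `O(n ^ (v - 2))` copies of `J`. -/
lemma card_copies_meeting {W : Type*} [Fintype W] (J : SimpleGraph W) (n : ℕ)
    (T : Finset (Sym2 (Fin n))) :
    #((copies J n).filter fun h => ¬ Disjoint h T)
      ≤ #T * #J.edgeFinset * (2 * n ^ (Fintype.card W - 2)) := by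
  have hsub : ((copies J n).filter fun h => ¬ Disjoint h T) ⊆
      (T ×ˢ J.edgeFinset).biUnion fun q =>
        (Finset.univ.filter fun f : W ↪ Fin n => Sym2.map f q.2 = q.1).image
          fun f : W ↪ Fin n => J.edgeFinset.image (Sym2.map f) := by
    intro h hh
    obtain ⟨hc, hd⟩ := Finset.mem_filter.1 hh
    obtain ⟨f, -, rfl⟩ := Finset.mem_image.1 hc
    obtain ⟨t, ht, htT⟩ := Finset.not_disjoint_iff.1 hd
    obtain ⟨d, hdJ, hdt⟩ := Finset.mem_image.1 ht
    refine Finset.mem_biUnion.2 ⟨(t, d), Finset.mem_product.2 ⟨htT, hdJ⟩,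
      Finset.mem_image.2 ⟨f, ?_, rfl⟩⟩
    simpa using hdt
  refine (Finset.card_le_card hsub).trans ?_
  rw [← Finset.card_product]
  refine Finset.card_biUnion_le_card_mul _ _ _ fun q hq => Finset.card_image_le.trans ?_
  have := card_embeddings_edge J q.2 (Finset.mem_product.1 hq).2 q.1
  rwa [Fintype.card_fin] at this

lemma exp_neg_two_mul_le {x : ℝ} (h0 : 0 ≤ x) (h1 : x ≤ 1 / 2) : Real.exp (-(2 * x)) ≤ 1 - x := by
  rw [Real.exp_neg, inv_le_comm₀ (Real.exp_pos _) (by linarith)]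
  have h := Real.add_one_le_exp (2 * x)
  refine le_trans ?_ h
  rw [inv_le_comm₀ (by linarith) (by linarith), inv_le_iff_one_le_mul₀ (by linarith)]
  nlinarith

lemma pow_div_factorial_le_exp_neg {M y : ℝ} (hM : 0 ≤ M) (hMy : M * Real.exp 2 ≤ y) :
    M ^ ⌈y⌉₊ / (⌈y⌉₊).factorial ≤ Real.exp (-y) := by
  set k := ⌈y⌉₊
  have hk : y ≤ k := Nat.le_ceil y
  have h1 : (M * Real.exp 2) ^ k / k.factorial ≤ Real.exp (M * Real.exp 2) :=
    Real.pow_div_factorial_le_exp _ (by positivity) k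
  rw [mul_pow, mul_div_right_comm, ← Real.exp_nat_mul] at h1
  rw [← le_div_iff₀ (Real.exp_pos _), ← Real.exp_sub] at h1
  refine h1.trans (Real.exp_le_exp.2 ?_)
  linarith

/-- If `r` exceeds `x` by a large factor `L`, the failure probability of the thinning at density `r`
is at most `3 / 2` times the probability that a random set of density `x` misses `t` elements. -/
lemma tail_compare {e t : ℕ} (he : 1 ≤ e) {r x L M : ℝ} (hr : 0 ≤ r) (hr1 : r ≤ 1) (hx : 0 ≤ x)
    (hL : 24 * (e : ℝ) ≤ L) (hxr : x * L ≤ r) (hM : 0 ≤ M)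
    (hMr : M * Real.exp 2 ≤ r * t / 4 / e) (hxt : 1 / 3 ≤ x * t) :
    Real.exp (r * t / 4 - r * t / 2) + M ^ ⌈r * t / 4 / e⌉₊ / (⌈r * t / 4 / e⌉₊).factorial
      ≤ 3 / 2 * (1 - x) ^ t := by
  have he' : (1 : ℝ) ≤ e := by exact_mod_cast he
  set y := r * t / 4 / e with hy
  have hrt : 0 ≤ r * t := by positivity
  have hye : y * (4 * e) = r * t := by rw [hy]; field_simp
  have hyn : 0 ≤ y := by rw [hy]; positivity
  have hx1 : x ≤ 1 / 2 := by nlinarith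
  have h1 : Real.exp (r * t / 4 - r * t / 2) ≤ Real.exp (-y) := by
    apply Real.exp_le_exp.2
    nlinarith
  have h2 := pow_div_factorial_le_exp_neg hM hMr
  have hxL : x * t * L ≤ r * t := by
    have := mul_le_mul_of_nonneg_right hxr (Nat.cast_nonneg (α := ℝ) t)
    linarith
  have hy6 : 6 * (x * t) ≤ y := by
    have : x * t * (24 * e) ≤ y * (4 * e) := by
      rw [hye]
      refine le_trans ?_ hxL
      gcongr
    nlinarith
  have h3 : Real.exp (-y) ≤ 1 / 2 * Real.exp (-(2 * x)) ^ t := by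
    rw [← Real.exp_nat_mul]
    have h4 : Real.exp (-1) ≤ 1 / 2 := by
      rw [Real.exp_neg, inv_le_comm₀ (Real.exp_pos _) (by norm_num)]
      have := Real.add_one_le_exp (1 : ℝ)
      norm_num at this ⊢
      linarith
    calc Real.exp (-y) ≤ Real.exp (-1 + t * (-(2 * x))) := Real.exp_le_exp.2 (by linarith)
      _ = Real.exp (-1) * Real.exp (t * (-(2 * x))) := Real.exp_add _ _
      _ ≤ _ := by gcongr
  have h5 : Real.exp (-(2 * x)) ^ t ≤ (1 - x) ^ t := by
    gcongr
    exact exp_neg_two_mul_le hx hx1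
  have h6 : 0 ≤ Real.exp (-(2 * x)) ^ t := by positivity
  linarith

lemma eventually_rpow_ge {σ : ℝ} (hσ : 0 < σ) (C : ℝ) :
    ∀ᶠ n : ℕ in Filter.atTop, C ≤ (n : ℝ) ^ σ :=
  ((tendsto_rpow_atTop hσ).comp tendsto_natCast_atTop_atTop).eventually_ge_atTop C

/-- Weak duality: a random `J`-free graph missing every edge set `T` with probability at most
`3 / 2 * (1 - x) ^ #T` rules out a fractional certificate at `x`. -/
lemma no_cert {W : Type*} [Fintype W] (J : SimpleGraph W) (n : ℕ) {r x : ℝ} (hr : 0 ≤ r)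
    (hr1 : r ≤ 1) (D : Finset (Sym2 (Fin n)) → Finset (Sym2 (Fin n)))
    (hD : ∀ s, FFree J (SimpleGraph.fromEdgeSet (D s : Set (Sym2 (Fin n)))))
    (hmiss : ∀ T ⊆ (⊤ : SimpleGraph (Fin n)).edgeFinset,
      ∑ s ∈ (⊤ : SimpleGraph (Fin n)).edgeFinset.powerset,
        (if Disjoint (D s) T then bw r (⊤ : SimpleGraph (Fin n)).edgeFinset s else 0)
        ≤ 3 / 2 * (1 - x) ^ #T) :
    x ∉ fracCertSet J n := by
  rintro ⟨-, lam, hlam, hcost, hcov⟩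
  set E := (⊤ : SimpleGraph (Fin n)).edgeFinset with hE
  have hEc : #E = n.choose 2 := by
    rw [hE, SimpleGraph.card_edgeFinset_top_eq_card_choose_two, Fintype.card_fin]
  have key : (1 : ℝ) ≤ ∑ S : SimpleGraph (Fin n), lam S *
      ∑ s ∈ E.powerset, (if Disjoint (D s) (E \ S.edgeFinset) then bw r E s else 0) := by
    calc (1 : ℝ) = ∑ s ∈ E.powerset, bw r E s * 1 := by simp [sum_bw]
      _ ≤ ∑ s ∈ E.powerset, bw r E s * ∑ S : SimpleGraph (Fin n),
            (if Disjoint (D s) (E \ S.edgeFinset) then lam S else 0) := by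
          refine Finset.sum_le_sum fun s hs => ?_
          refine mul_le_mul_of_nonneg_left ?_ (bw_nonneg hr hr1 _ _)
          refine (hcov _ (hD s)).trans ?_
          rw [Finset.sum_filter]
          refine Finset.sum_le_sum fun S _ => ?_
          by_cases hle : SimpleGraph.fromEdgeSet (D s : Set (Sym2 (Fin n))) ≤ S
          · rw [if_pos hle, if_pos]
            rw [Finset.disjoint_left]
            intro z hz hzS
            obtain ⟨hzE, hzS⟩ := Finset.mem_sdiff.1 hzS
            apply hzS
            have hmono := SimpleGraph.edgeSet_mono hle
            rw [SimpleGraph.mem_edgeFinset]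
            apply hmono
            rw [SimpleGraph.edgeSet_fromEdgeSet]
            refine ⟨hz, ?_⟩
            simpa [hE] using hzE
          · rw [if_neg hle]
            split_ifs <;> simp [hlam]
      _ = _ := by
          simp only [Finset.mul_sum]
          rw [Finset.sum_comm]
          refine Finset.sum_congr rfl fun S _ => Finset.sum_congr rfl fun s _ => ?_
          split_ifs <;> ring
  have hub : ∑ S : SimpleGraph (Fin n), lam S *
      ∑ s ∈ E.powerset, (if Disjoint (D s) (E \ S.edgeFinset) then bw r E s else 0)
      ≤ 3 / 2 * ∑ S : SimpleGraph (Fin n), lam S * (1 - x) ^ (n.choose 2 - S.edgeFinset.card) := by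
    rw [Finset.mul_sum]
    refine Finset.sum_le_sum fun S _ => ?_
    have hSE : S.edgeFinset ⊆ E := SimpleGraph.edgeFinset_mono le_top
    have h := hmiss (E \ S.edgeFinset) Finset.sdiff_subset
    rw [Finset.card_sdiff_of_subset hSE, hEc] at h
    have := mul_le_mul_of_nonneg_left h (hlam S)
    linarith
  linarith

/-- The fractional expectation threshold of `J`-freeness is at least `n ^ (-β - σ)` whenever
`β > (v - 2) / (e - 1)`. -/
lemma cert_lower {W : Type*} [Fintype W] (J : SimpleGraph W) {e : ℕ}
    (he_def : #J.edgeFinset = e) (he : 1 ≤ e) (hv : 2 ≤ Fintype.card W) {β σ : ℝ} (hβ : 0 < β) (hσ : 0 < σ)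
    (hη : (Fintype.card W : ℝ) - 2 < β * (e - 1)) :
    ∃ n₀ : ℕ, ∀ n : ℕ, n₀ ≤ n → ∀ x ∈ fracCertSet J n, (n : ℝ) ^ (-β - σ) ≤ x := by
  set v := Fintype.card W with hv_def
  set η := β * (e - 1) - ((v : ℝ) - 2) with hη_def
  have hη0 : 0 < η := by linarith
  have he' : (1 : ℝ) ≤ e := by exact_mod_cast he
  obtain ⟨n₀, hn₀⟩ := Filter.eventually_atTop.1 ((eventually_rpow_ge hσ (24 * e)).and
    ((eventually_rpow_ge hη0 (8 * e ^ 2 * Real.exp 2)).and (Filter.eventually_ge_atTop 1)))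
  refine ⟨n₀, fun n hn x hx => ?_⟩
  obtain ⟨hnσ, hnη, hn1⟩ := hn₀ n hn
  by_contra! hlt
  have hx0 : 0 ≤ x := hx.1.1
  have hx1 : x ≤ 1 := hx.1.2
  have hn1' : (1 : ℝ) ≤ n := by exact_mod_cast hn1
  have hnpos : (0 : ℝ) < n := by linarith
  set r : ℝ := (n : ℝ) ^ (-β) with hr
  have hr0 : 0 < r := by positivity
  have hr1 : r ≤ 1 := Real.rpow_le_one_of_one_le_of_nonpos hn1' (by linarith)
  have hxr : x * (n : ℝ) ^ σ ≤ r := by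
    have : (n : ℝ) ^ (-β - σ) * (n : ℝ) ^ σ = r := by
      rw [← Real.rpow_add hnpos, hr]; ring_nf
    rw [← this]
    gcongr
  obtain ⟨D, hDH, hD⟩ := exists_thinning hr0.le hr1 (⊤ : SimpleGraph (Fin n)).edgeFinset
    (copies J n) e he (he_def ▸ copies_spec J n)
  refine no_cert J n hr0.le hr1 D (fun s => ffree_of_copies J _ (hDH s)) (fun T hT => ?_) hx
  by_cases hxt : x * #T ≤ 1 / 3
  -- For small `T` the bound holds because its right-hand side is at least `1`.
  · have hb := one_add_mul_le_pow (a := -x) (by linarith) #T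
    have h1 : ∑ s ∈ (⊤ : SimpleGraph (Fin n)).edgeFinset.powerset,
        (if Disjoint (D s) T then bw r (⊤ : SimpleGraph (Fin n)).edgeFinset s else 0) ≤ 1 := by
      rw [← sum_bw r (⊤ : SimpleGraph (Fin n)).edgeFinset]
      refine Finset.sum_le_sum fun s _ => ?_
      have := bw_nonneg hr0.le hr1 (⊤ : SimpleGraph (Fin n)).edgeFinset s
      split_ifs <;> linarith
    rw [← sub_eq_add_neg] at hb
    linarith
  · push Not at hxt
    refine (hD T hT (r * #T / 4)).trans ?_
    refine tail_compare he hr0.le hr1 hx0 hnσ hxr (by positivity) ?_ hxt.le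
    have hK : (#((copies J n).filter fun h => ¬ Disjoint h T) : ℝ)
        ≤ #T * e * (2 * (n : ℝ) ^ (v - 2)) := by
      exact_mod_cast he_def ▸ card_copies_meeting J n T
    have hpow : (n : ℝ) ^ (v - 2) * r ^ e = r * ((n : ℝ) ^ η)⁻¹ := by
      rw [hr, ← Real.rpow_natCast, ← Real.rpow_natCast, ← Real.rpow_mul hnpos.le,
        ← Real.rpow_neg hnpos.le, ← Real.rpow_add hnpos, ← Real.rpow_add hnpos]
      congr 1
      rw [Nat.cast_sub hv, hη_def]
      push_cast
      ring
    have hηpos : 0 < (n : ℝ) ^ η := by positivity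
    calc (#((copies J n).filter fun h => ¬ Disjoint h T) : ℝ) * r ^ e * Real.exp 2
        ≤ #T * e * (2 * (n : ℝ) ^ (v - 2)) * r ^ e * Real.exp 2 := by gcongr
      _ = 2 * e * #T * ((n : ℝ) ^ (v - 2) * r ^ e) * Real.exp 2 := by ring
      _ = (8 * e ^ 2 * Real.exp 2) * (r * #T / 4 / e) * ((n : ℝ) ^ η)⁻¹ := by
          rw [hpow]; field_simp; ring
      _ ≤ (n : ℝ) ^ η * (r * #T / 4 / e) * ((n : ℝ) ^ η)⁻¹ := by gcongr
      _ = _ := by field_simp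

/-! ### Upper bound on the critical probability -/

/-- Second moment inequality for the number of sets `S i` contained in the random set. -/
lemma second_moment {α ι : Type*} [DecidableEq α] [Fintype ι] {p : ℝ} (h0 : 0 ≤ p) (h1 : p ≤ 1)
    (E : Finset α) (S : ι → Finset α) (hS : ∀ i, S i ⊆ E) :
    (∑ i, p ^ #(S i)) ^ 2 ≤
      (∑ s ∈ E.powerset, if ∃ i, S i ⊆ s then bw p E s else 0) *
        ∑ i, ∑ j, p ^ #(S i ∪ S j) := by
  set Z : Finset α → ℝ := fun s => ∑ i, if S i ⊆ s then 1 else 0 with hZ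
  have hEZ : ∑ i, p ^ #(S i) = ∑ s ∈ E.powerset, bw p E s * Z s := by
    simp only [hZ, Finset.mul_sum, mul_ite, mul_one, mul_zero]
    rw [Finset.sum_comm]
    exact Finset.sum_congr rfl fun i _ => (sum_bw_superset p E _ (hS i)).symm
  have hEZ2 : ∑ i, ∑ j, p ^ #(S i ∪ S j) = ∑ s ∈ E.powerset, bw p E s * Z s ^ 2 := by
    have hterm : ∀ s, bw p E s * Z s ^ 2
        = ∑ i, ∑ j, if S i ∪ S j ⊆ s then bw p E s else 0 := by
      intro s
      simp only [hZ]
      rw [sq, Finset.sum_mul_sum, Finset.mul_sum]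
      refine Finset.sum_congr rfl fun i _ => ?_
      rw [Finset.mul_sum]
      refine Finset.sum_congr rfl fun j _ => ?_
      by_cases hi : S i ⊆ s <;> by_cases hj : S j ⊆ s <;> simp [hi, hj, Finset.union_subset_iff]
    simp only [hterm]
    rw [Finset.sum_comm (s := E.powerset)]
    refine Finset.sum_congr rfl fun i _ => ?_
    rw [Finset.sum_comm (s := E.powerset)]
    exact Finset.sum_congr rfl fun j _ =>
      (sum_bw_superset p E _ (Finset.union_subset (hS i) (hS j))).symm
  rw [hEZ, hEZ2]
  refine Finset.sum_sq_le_sum_mul_sum_of_sq_le_mul _ ?_ ?_ ?_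
  · intro s _
    have := bw_nonneg h0 h1 E s
    split_ifs <;> simp [this]
  · intro s _
    exact mul_nonneg (bw_nonneg h0 h1 E s) (sq_nonneg _)
  · intro s _
    refine le_of_eq ?_
    split_ifs with h
    · ring
    · push Not at h
      have : Z s = 0 := Finset.sum_eq_zero fun i _ => if_neg (h i)
      simp [this]

/-- The number of edges of `F` with both ends in `A`. -/
noncomputable def eIn {V : Type*} [Fintype V] (F : SimpleGraph V) (A : Finset V) : ℕ :=
  #(F.edgeFinset.filter fun d => ∀ v ∈ d, v ∈ A)

/-- In the partite host `V × [m]`, the copies of `F` given by `φ` and `ψ` share only edges whose two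
ends lie in the set where `φ` and `ψ` agree. -/
lemma card_inter_partite {V : Type*} [Fintype V] (F : SimpleGraph V) {n m : ℕ}
    (ι : V × Fin m ↪ Fin n) (φ ψ : V → Fin m) :
    #(F.edgeFinset.image (Sym2.map fun v => ι (v, φ v)) ∩
        F.edgeFinset.image (Sym2.map fun v => ι (v, ψ v)))
      ≤ eIn F (Finset.univ.filter fun v => ψ v = φ v) := by
  refine le_trans (Finset.card_le_card ?_) (Finset.card_image_le
    (s := F.edgeFinset.filter fun d => ∀ v ∈ d, v ∈ Finset.univ.filter fun v => ψ v = φ v)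
    (f := Sym2.map fun v => ι (v, φ v)))
  intro z hz
  obtain ⟨h1, h2⟩ := Finset.mem_inter.1 hz
  obtain ⟨d, hd, rfl⟩ := Finset.mem_image.1 h1
  obtain ⟨d', hd', hdd⟩ := Finset.mem_image.1 h2
  refine Finset.mem_image.2 ⟨d, Finset.mem_filter.2 ⟨hd, ?_⟩, rfl⟩
  clear hz h1 h2 hd hd'
  intro w hw
  rw [Finset.mem_filter]
  refine ⟨Finset.mem_univ _, ?_⟩
  have hmem : ι (w, φ w) ∈ Sym2.map (fun v => ι (v, φ v)) d := Sym2.mem_map.2 ⟨w, hw, rfl⟩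
  rw [← hdd] at hmem
  obtain ⟨u, -, hu⟩ := Sym2.mem_map.1 hmem
  have := ι.injective hu
  rw [Prod.mk.injEq] at this
  rw [← this.2, this.1]

/-- The sum over `A` bounds `E[Z ^ 2] / (E Z) ^ 2` for the number `Z` of partite copies of `F`, and this
ratio is at least `2` when `Z` vanishes with probability at least `1 / 2`. -/
lemma second_moment_partite {V : Type*} [Fintype V] (F : SimpleGraph V) {n m : ℕ} (hm : 0 < m)
    (ι : V × Fin m ↪ Fin n) {p : ℝ} (h0 : 0 < p) (h1 : p ≤ 1) (hp : muFree F n p = 1 / 2) :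
    2 ≤ ∑ A : Finset V, ((m : ℝ)⁻¹) ^ #A * (p⁻¹) ^ eIn F A := by
  set E := (⊤ : SimpleGraph (Fin n)).edgeFinset with hE
  have hEc : #E = n.choose 2 := by
    rw [hE, SimpleGraph.card_edgeFinset_top_eq_card_choose_two, Fintype.card_fin]
  set S : (V → Fin m) → Finset (Sym2 (Fin n)) :=
    fun φ => F.edgeFinset.image (Sym2.map fun v => ι (v, φ v)) with hS
  have hinj : ∀ φ : V → Fin m, Function.Injective fun v => ι (v, φ v) := by
    intro φ u w huw
    have := ι.injective huw
    rw [Prod.mk.injEq] at this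
    exact this.1
  have hSE : ∀ φ, S φ ⊆ E := fun φ => image_subset_top F _ (hinj φ)
  have hSc : ∀ φ, #(S φ) = #F.edgeFinset := fun φ => card_image_edges F _ (hinj φ)
  have hmu : muFree F n p = ∑ s ∈ E.powerset,
      if FFree F (SimpleGraph.fromEdgeSet (s : Set (Sym2 (Fin n)))) then bw p E s else 0 := by
    rw [← sum_graphs fun s => if FFree F (SimpleGraph.fromEdgeSet (s : Set (Sym2 (Fin n))))
      then bw p E s else 0]
    refine Finset.sum_congr rfl fun G _ => ?_
    simp only [SimpleGraph.coe_edgeFinset, SimpleGraph.fromEdgeSet_edgeSet, bw, hEc]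
  have hprob : (∑ s ∈ E.powerset, if ∃ φ, S φ ⊆ s then bw p E s else 0) ≤ 1 / 2 := by
    have hsum : (∑ s ∈ E.powerset, if ∃ φ, S φ ⊆ s then bw p E s else 0) + muFree F n p ≤ 1 := by
      rw [hmu, ← sum_bw p E, ← Finset.sum_add_distrib]
      refine Finset.sum_le_sum fun s _ => ?_
      have hb := bw_nonneg h0.le h1 E s
      by_cases hφ : ∃ φ, S φ ⊆ s
      · obtain ⟨φ, hφ'⟩ := hφ
        have hnf : ¬ FFree F (SimpleGraph.fromEdgeSet (s : Set (Sym2 (Fin n)))) := by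
          rw [FFree, not_not]
          refine ⟨⟨_, hinj φ⟩, fun a b hab => ?_⟩
          rw [SimpleGraph.fromEdgeSet_adj]
          refine ⟨?_, (hinj φ).ne hab.ne⟩
          refine hφ' (Finset.mem_image.2 ⟨s(a, b), by simpa using hab, ?_⟩)
          simp
        rw [if_pos ⟨φ, hφ'⟩, if_neg hnf, add_zero]
      · rw [if_neg hφ, zero_add]
        split_ifs <;> simp [hb]
    linarith
  have hCS := second_moment h0.le h1 E S hSE
  have hmpos : (0 : ℝ) < m := by exact_mod_cast hm
  set e := #F.edgeFinset with he
  set v := Fintype.card V with hv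
  have hfirst : ∑ φ : V → Fin m, p ^ #(S φ) = (m : ℝ) ^ v * p ^ e := by
    simp only [hSc]
    simp [hv]
  have hpair : ∀ φ ψ : V → Fin m, p ^ #(S φ ∪ S ψ) ≤
      p ^ (2 * e) * ∑ A : Finset V, if ∀ a ∈ A, ψ a = φ a then (p⁻¹) ^ eIn F A else 0 := by
    intro φ ψ
    set A₀ := Finset.univ.filter fun v => ψ v = φ v with hA₀
    have hle : (p⁻¹) ^ eIn F A₀
        ≤ ∑ A : Finset V, if ∀ a ∈ A, ψ a = φ a then (p⁻¹) ^ eIn F A else 0 := by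
      have hnn : ∀ A ∈ (Finset.univ : Finset (Finset V)),
          0 ≤ if ∀ a ∈ A, ψ a = φ a then (p⁻¹) ^ eIn F A else 0 := by
        intro A _
        split_ifs <;> positivity
      refine le_trans (le_of_eq ?_) (Finset.single_le_sum hnn (Finset.mem_univ A₀))
      rw [if_pos]
      intro a ha
      exact (Finset.mem_filter.1 ha).2
    refine le_trans ?_ (mul_le_mul_of_nonneg_left hle (by positivity))
    rw [inv_pow, ← div_eq_mul_inv, le_div_iff₀ (by positivity), ← pow_add]
    refine pow_le_pow_of_le_one h0.le h1 ?_
    have hI := card_inter_partite F ι φ ψ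
    have hU := Finset.card_union_add_card_inter (S φ) (S ψ)
    rw [hSc, hSc] at hU
    change #(S φ ∩ S ψ) ≤ eIn F A₀ at hI
    omega
  have hsecond : ∑ φ : V → Fin m, ∑ ψ : V → Fin m, p ^ #(S φ ∪ S ψ) ≤
      ((m : ℝ) ^ v * p ^ e) ^ 2 * ∑ A : Finset V, ((m : ℝ)⁻¹) ^ #A * (p⁻¹) ^ eIn F A := by
    calc ∑ φ : V → Fin m, ∑ ψ : V → Fin m, p ^ #(S φ ∪ S ψ)
        ≤ ∑ φ : V → Fin m, ∑ ψ : V → Fin m, p ^ (2 * e) *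
            ∑ A : Finset V, if ∀ a ∈ A, ψ a = φ a then (p⁻¹) ^ eIn F A else 0 :=
          Finset.sum_le_sum fun φ _ => Finset.sum_le_sum fun ψ _ => hpair φ ψ
      _ = ∑ φ : V → Fin m, p ^ (2 * e) * ∑ A : Finset V, ∑ ψ : V → Fin m,
            if ∀ a ∈ A, ψ a = φ a then (p⁻¹) ^ eIn F A else 0 := by
          refine Finset.sum_congr rfl fun φ _ => ?_
          rw [← Finset.mul_sum, Finset.sum_comm]
      _ = ∑ φ : V → Fin m, p ^ (2 * e) * ∑ A : Finset V,
            (m : ℝ) ^ v * (((m : ℝ)⁻¹) ^ #A * (p⁻¹) ^ eIn F A) := by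
          refine Finset.sum_congr rfl fun φ _ => ?_
          congr 1
          refine Finset.sum_congr rfl fun A _ => ?_
          rw [← Finset.sum_filter, Finset.sum_const, card_functions_prescribed A φ, nsmul_eq_mul,
            Fintype.card_fin, Nat.cast_pow, pow_sub₀ _ hmpos.ne' (Finset.card_le_univ A), inv_pow]
          ring
      _ = _ := by
          rw [Finset.sum_const, ← Finset.mul_sum]
          simp only [Finset.card_univ, Fintype.card_fun, Fintype.card_fin, nsmul_eq_mul,
            Nat.cast_pow]
          ring
  rw [hfirst] at hCS
  have hpos : 0 < ((m : ℝ) ^ v * p ^ e) ^ 2 := by positivity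
  have hsn : 0 ≤ ∑ φ : V → Fin m, ∑ ψ : V → Fin m, p ^ #(S φ ∪ S ψ) :=
    Finset.sum_nonneg fun φ _ => Finset.sum_nonneg fun ψ _ => pow_nonneg h0.le _
  refine le_of_mul_le_mul_left (le_trans ?_ hsecond) hpos
  have h3 := hCS.trans (mul_le_mul_of_nonneg_right hprob hsn)
  clear_value S
  linarith

/-- The threshold for containing `F` is at most `n ^ (-α + δ)` when every vertex set `A` of `F`
spans at most `#A / α` edges. -/
lemma pc_upper {V : Type*} [Fintype V] [Nonempty V] (F : SimpleGraph V) {α δ : ℝ} (hδ : 0 < δ)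
    (hδ1 : δ ≤ 1) (hα : ∀ A : Finset V, (eIn F A : ℝ) * α ≤ #A) :
    ∃ n₀ : ℕ, ∀ n : ℕ, n₀ ≤ n → ∀ p ∈ Set.Icc (0 : ℝ) 1, muFree F n p = 1 / 2 →
      p ≤ (n : ℝ) ^ (-α + δ) := by
  set v := Fintype.card V with hv
  have hvpos : 0 < v := Fintype.card_pos
  set C : ℝ := (2 * v : ℝ) ^ v with hC
  have hCpos : 0 < C := by positivity
  obtain ⟨n₀, hn₀⟩ := Filter.eventually_atTop.1
    ((eventually_rpow_ge hδ (2 ^ v * C + 1)).and (Filter.eventually_ge_atTop v))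
  refine ⟨n₀, fun n hn p hp hmu => ?_⟩
  obtain ⟨hnδ, hnv⟩ := hn₀ n hn
  by_contra! hlt
  have hn1 : (1 : ℝ) ≤ n := by exact_mod_cast hvpos.trans_le hnv
  have hnpos : (0 : ℝ) < n := by linarith
  have hp0 : 0 < p := lt_of_le_of_lt (by positivity) hlt
  set m := n / v with hm
  have hmpos : 0 < m := Nat.div_pos hnv hvpos
  have hcard : Fintype.card (V × Fin m) ≤ Fintype.card (Fin n) := by
    rw [Fintype.card_prod, Fintype.card_fin, Fintype.card_fin, ← hv]
    exact Nat.mul_div_le n v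
  obtain ⟨ι⟩ := Function.Embedding.nonempty_of_card_le hcard
  have h2 := second_moment_partite F hmpos ι hp0 hp.2 hmu
  have hmR : (0 : ℝ) < m := by exact_mod_cast hmpos
  have hvR : (1 : ℝ) ≤ v := by exact_mod_cast hvpos
  have hminv : (m : ℝ)⁻¹ ≤ 2 * v * (n : ℝ)⁻¹ := by
    have hlt' : n < v * (m + 1) := by
      have := Nat.lt_mul_div_succ n hvpos
      simpa [hm] using this
    have hle : n ≤ 2 * v * m := by nlinarith
    have hle' : (n : ℝ) ≤ 2 * v * m := by exact_mod_cast hle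
    rw [← div_eq_mul_inv, le_div_iff₀ hnpos, inv_mul_le_iff₀ hmR]
    linarith
  have hpinv : p⁻¹ ≤ (n : ℝ) ^ (α - δ) := by
    rw [inv_le_comm₀ hp0 (by positivity), ← Real.rpow_neg hnpos.le]
    refine le_trans (le_of_eq ?_) hlt.le
    ring_nf
  have hterm : ∀ A ∈ (Finset.univ : Finset (Finset V)).erase ∅,
      ((m : ℝ)⁻¹) ^ #A * (p⁻¹) ^ eIn F A ≤ C * (n : ℝ) ^ (-δ) := by
    intro A hA
    have hA1 : 1 ≤ #A := Finset.card_pos.2 (Finset.nonempty_iff_ne_empty.2 (Finset.ne_of_mem_erase hA))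
    have hA1' : (1 : ℝ) ≤ #A := by exact_mod_cast hA1
    have hC1 : (2 * v : ℝ) ^ #A ≤ C := pow_le_pow_right₀ (by linarith) (Finset.card_le_univ A)
    calc ((m : ℝ)⁻¹) ^ #A * (p⁻¹) ^ eIn F A
        ≤ (2 * v * (n : ℝ)⁻¹) ^ #A * ((n : ℝ) ^ (α - δ)) ^ eIn F A := by gcongr
      _ = (2 * v : ℝ) ^ #A * ((n : ℝ) ^ (-(#A : ℝ)) * (n : ℝ) ^ ((α - δ) * eIn F A)) := by
          rw [mul_pow, Real.rpow_mul hnpos.le, Real.rpow_natCast, Real.rpow_neg hnpos.le,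
            Real.rpow_natCast, inv_pow]
          ring
      _ ≤ C * (n : ℝ) ^ (-δ) := by
          rw [← Real.rpow_add hnpos]
          gcongr
          · have hAα := hα A
            rcases Nat.eq_zero_or_pos (eIn F A) with h | h
            · rw [h]
              push_cast
              linarith
            · have h' : (1 : ℝ) ≤ eIn F A := by exact_mod_cast h
              nlinarith
  have hzero : ((m : ℝ)⁻¹) ^ #(∅ : Finset V) * (p⁻¹) ^ eIn F ∅ = 1 := by
    have : eIn F (∅ : Finset V) = 0 := by
      rw [eIn, Finset.card_eq_zero, Finset.filter_eq_empty_iff]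
      intro d _ hd
      induction d with
      | _ a b => simpa using hd a
    rw [this]
    simp
  rw [← Finset.add_sum_erase _ _ (Finset.mem_univ ∅), hzero] at h2
  have h3 := Finset.sum_le_card_nsmul _ _ _ hterm
  have h4 : (#((Finset.univ : Finset (Finset V)).erase ∅) : ℝ) ≤ 2 ^ v := by
    have : #((Finset.univ : Finset (Finset V)).erase ∅) ≤ 2 ^ v := by
      refine (Finset.card_le_card (Finset.erase_subset _ _)).trans ?_
      rw [Finset.card_univ, Fintype.card_finset]
    exact_mod_cast this
  rw [nsmul_eq_mul] at h3
  have h5 : (1 : ℝ) ≤ 2 ^ v * C * (n : ℝ) ^ (-δ) := by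
    have : (#((Finset.univ : Finset (Finset V)).erase ∅) : ℝ) * (C * (n : ℝ) ^ (-δ))
        ≤ 2 ^ v * (C * (n : ℝ) ^ (-δ)) := by gcongr
    linarith
  rw [Real.rpow_neg hnpos.le, ← div_eq_mul_inv, le_div_iff₀ (by positivity)] at h5
  linarith

/-! ### The densest subgraph and the comparison of exponents -/

lemma eIn_eq_card_induce {V : Type*} [Fintype V] (F : SimpleGraph V) (A : Finset V) :
    #(F.induce (A : Set V)).edgeFinset = eIn F A := by
  rw [eIn, ← Finset.card_image_of_injective (F.induce (A : Set V)).edgeFinset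
    (Sym2.map.injective (Subtype.val_injective (p := fun x => x ∈ (A : Set V))))]
  congr 1
  ext d
  simp only [Finset.mem_image, Finset.mem_filter]
  constructor
  · rintro ⟨d', hd', rfl⟩
    induction d' with
    | _ a b =>
      have hab : F.Adj a b := by simpa using hd'
      have ha : (a : V) ∈ A := a.2
      have hb : (b : V) ∈ A := b.2
      simp [hab, ha, hb]
  · rintro ⟨hd, hA⟩
    induction d with
    | _ a b =>
      have hab : F.Adj a b := by simpa using hd
      refine ⟨s(⟨a, hA a (by simp)⟩, ⟨b, hA b (by simp)⟩), by simpa using hab, by simp⟩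

lemma ffree_of_induce {V W : Type*} (F : SimpleGraph V) (A : Set V) (G : SimpleGraph W)
    (h : FFree (F.induce A) G) : FFree F G := by
  rintro ⟨f, hf⟩
  exact h ⟨(Function.Embedding.subtype _).trans f, fun a b hab => hf a b hab⟩

/-- A densest vertex set of a graph with a vertex of degree two has density at least `2 / 3`. -/
lemma exists_densest {V : Type*} [Fintype V] (F : SimpleGraph V) (hF : ∃ v, 2 ≤ F.degree v) :
    ∃ A : Finset V, 2 ≤ #A ∧ 2 ≤ eIn F A ∧ 2 * #A ≤ 3 * eIn F A ∧
      ∀ B : Finset V, eIn F B * #A ≤ eIn F A * #B := by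
  obtain ⟨w, hw⟩ := hF
  obtain ⟨a, ha, b, hb, hab⟩ := Finset.one_lt_card.1 (show 1 < #(F.neighborFinset w) from hw)
  rw [SimpleGraph.mem_neighborFinset] at ha hb
  obtain ⟨A, hA, hmax⟩ := Finset.exists_max_image
    ((Finset.univ : Finset (Finset V)).filter fun A => A.Nonempty)
    (fun A => (eIn F A : ℚ) / #A) ⟨{w}, by simp⟩
  have hAne : A.Nonempty := by simpa using hA
  have hApos : 0 < #A := Finset.card_pos.2 hAne
  have hle : ∀ B : Finset V, eIn F B * #A ≤ eIn F A * #B := by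
    intro B
    rcases B.eq_empty_or_nonempty with rfl | hB
    · have : eIn F (∅ : Finset V) = 0 := by
        rw [eIn, Finset.card_eq_zero, Finset.filter_eq_empty_iff]
        intro d _ hd
        induction d with
        | _ a b => simpa using hd a
      simp [this]
    · have h := hmax B (by simpa using hB)
      have hBpos : 0 < #B := Finset.card_pos.2 hB
      rw [div_le_div_iff₀ (by exact_mod_cast hBpos) (by exact_mod_cast hApos)] at h
      exact_mod_cast h
  have hcherry : 2 ≤ eIn F {w, a, b} := by
    have hne : s(w, a) ≠ s(w, b) := by
      intro h
      exact hab (Sym2.congr_right.1 h)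
    rw [← Finset.card_pair hne]
    refine Finset.card_le_card fun d hd => ?_
    rw [Finset.mem_insert, Finset.mem_singleton] at hd
    rcases hd with rfl | rfl <;> simp [ha, hb]
  have hc3 : #({w, a, b} : Finset V) ≤ 3 := Finset.card_le_three
  have h23 : 2 * #A ≤ 3 * eIn F A := by
    have := hle {w, a, b}
    nlinarith
  have hepos : 0 < eIn F A := by omega
  have hA2 : 2 ≤ #A := by
    obtain ⟨d, hd⟩ := Finset.card_pos.1 hepos
    rw [Finset.mem_filter] at hd
    induction d with
    | _ x y =>
      have hxy : F.Adj x y := by simpa using hd.1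
      exact Finset.one_lt_card.2 ⟨x, hd.2 x (by simp), y, hd.2 y (by simp), hxy.ne⟩
  exact ⟨A, hA2, by omega, h23, hle⟩

lemma fracCertSet_induce {V : Type*} [Fintype V] (F : SimpleGraph V) (A : Finset V) (n : ℕ) :
    fracCertSet F n ⊆ fracCertSet (F.induce (A : Set V)) n := by
  rintro x ⟨hx, lam, h1, h2, h3⟩
  exact ⟨hx, lam, h1, h2, fun G hG => h3 G (ffree_of_induce F _ G hG)⟩

lemma certSet_subset_fracCertSet {V : Type*} [Fintype V] (F : SimpleGraph V) (n : ℕ) :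
    certSet F n ⊆ fracCertSet F n := by
  rintro x ⟨hx, 𝒢, hcov, hcost⟩
  refine ⟨hx, fun S => if S ∈ 𝒢 then 1 else 0, fun S => by positivity, ?_, ?_⟩
  · simpa [Finset.sum_ite_mem] using hcost
  · intro G hG
    obtain ⟨J, hJ, hGJ⟩ := hcov G hG
    have hnn : ∀ S ∈ Finset.univ.filter (fun S : SimpleGraph (Fin n) => G ≤ S),
        (0 : ℝ) ≤ if S ∈ 𝒢 then 1 else 0 := fun S _ => by positivity
    refine le_trans ?_ (Finset.single_le_sum hnn
      (Finset.mem_filter.2 ⟨Finset.mem_univ J, hGJ⟩))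
    simp [hJ]

theorem main_result {V : Type*} [Fintype V] (F : SimpleGraph V)
    (hF : ∃ v, 2 ≤ F.degree v) :
    ∃ γ : ℝ, 0 < γ ∧ ∃ n₀ : ℕ, ∀ n : ℕ, n₀ ≤ n →
      ∀ pc q qf : ℝ,
        (pc ∈ Set.Icc (0 : ℝ) 1 ∧ muFree F n pc = 1 / 2) →
        IsLeast (certSet F n) q →
        IsLeast (fracCertSet F n) qf →
        (n : ℝ) ^ γ * pc ≤ q ∧ (n : ℝ) ^ γ * pc ≤ qf := by
  obtain ⟨A, hA2, he2, h23, hmax⟩ := exists_densest F hF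
  have : Nonempty V := ⟨hF.choose⟩
  have hA2' : (2 : ℝ) ≤ #A := by exact_mod_cast hA2
  have he2' : (2 : ℝ) ≤ eIn F A := by exact_mod_cast he2
  have h23' : 2 * (#A : ℝ) ≤ 3 * eIn F A := by exact_mod_cast h23
  have hepos : (0 : ℝ) < eIn F A := by linarith
  have heJ : #(F.induce (A : Set V)).edgeFinset = eIn F A := eIn_eq_card_induce F A
  have hvJ : Fintype.card (A : Set V) = #A := by simp
  -- With `α = v / e ≤ 3 / 2`, this `δ` is small enough that `(v - 2) / (e - 1) < α - 3 * δ`.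
  set δ : ℝ := 1 / (12 * eIn F A) with hδ
  set α : ℝ := #A / eIn F A with hα
  have hδ0 : 0 < δ := by positivity
  have hδe : δ * eIn F A = 1 / 12 := by rw [hδ]; field_simp
  have hαe : α * eIn F A = #A := by rw [hα]; field_simp
  have hδ1 : δ ≤ 1 := by nlinarith
  have hα32 : α ≤ 3 / 2 := by rw [hα, div_le_iff₀ hepos]; linarith
  have hβ : 0 < α - 3 * δ := by
    by_contra! hcon
    nlinarith
  obtain ⟨n₁, hn₁⟩ := pc_upper F (α := α) hδ0 hδ1 (by
    intro B
    rw [hα, ← mul_div_assoc, div_le_iff₀ hepos, mul_comm (#B : ℝ)]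
    exact_mod_cast hmax B)
  obtain ⟨n₂, hn₂⟩ := cert_lower (F.induce (A : Set V)) (e := eIn F A)
    (by rw [← heJ]; congr!) (by omega) (by rw [hvJ]; omega) hβ hδ0 (by rw [hvJ]; nlinarith)
  refine ⟨δ, hδ0, max (max n₁ n₂) 1, fun n hn pc q qf hpc hq hqf => ?_⟩
  have hn1 : n₁ ≤ n := by omega
  have hn2 : n₂ ≤ n := by omega
  have hnpos : (0 : ℝ) < n := by
    have : 0 < n := by omega
    exact_mod_cast this
  have hup : (n : ℝ) ^ δ * pc ≤ (n : ℝ) ^ (-(α - 3 * δ) - δ) := by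
    calc (n : ℝ) ^ δ * pc ≤ (n : ℝ) ^ δ * (n : ℝ) ^ (-α + δ) := by
          gcongr
          exact hn₁ n hn1 pc hpc.1 hpc.2
      _ = _ := by rw [← Real.rpow_add hnpos]; ring_nf
  exact ⟨hup.trans (hn₂ n hn2 q
      (fracCertSet_induce F A n (certSet_subset_fracCertSet F n hq.1))),
    hup.trans (hn₂ n hn2 qf (fracCertSet_induce F A n hqf.1))⟩
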